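/- Any two even unimodular ℤ-lattices of rank 10 and signature (1,9) are isomorphic. Concretely: if A and B are symmetric 10×10 integer matrices with all diagonal entries even, with determinant of absolute value 1, and such that over ℝ each is congruent to the diagonal matrix diag(1, −1, −1, −1, −1, −1, −1, −1, −1, −1), then there exists P ∈ GL₁₀(ℤ) with Pᵀ A P = B. -/

import Mathlib

open Matrix

/-- The diagonal matrix `diag(1, -1, -1, -1, -1, -1, -1, -1, -1, -1)` of signature
`(1, 9)`. -/
noncomputable def sigD : Matrix (Fin 10) (Fin 10) ℝ :=
  Matrix.diagonal fun i => if i = 0 then 1 else -1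

/-!
Let `L` be an even unimodular lattice of signature `(1, 9)`. Hermite's reduction, iterated inside
orthogonal complements, gives four pairwise orthogonal vectors of norm `±2`, and from these
Lagrange's four-square theorem produces a nonzero isotropic vector. Hence `L ≅ U ⊕ M` with `U` the
hyperbolic plane and `M` even, unimodular and negative definite of rank `8`.

The odd unimodular lattice `⟨1⟩ ⊕ M` of signature `(1, 8)` has an orthogonal basis of vectors of
norm `±1`: reduction again supplies isotropic vectors, which let one split off vectors of norm `-1`
one at a time. Since `M` is even, the `⟨1⟩`-coordinates of these basis vectors are odd, and after
changes of sign they are all congruent to `1` modulo `4`. So for two such lattices `M` and `M'`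
there is an isometry `⟨1⟩ ⊕ M ≅ ⟨1⟩ ⊕ M'` that fixes the characteristic vector `(1, 0)` modulo `4`.
As `U ⊕ M` embeds into `⟨-1⟩ ⊕ ⟨1⟩ ⊕ M` with form scaled by `4`, this isometry induces an isometry
`U ⊕ M ≅ U ⊕ M'` of the original lattices.
-/

open Module
open LinearMap (BilinForm)

section Functionals

variable {L : Type*} [AddCommGroup L]

theorem exists_eq_smul_of_forall_dvd {φ : L →ₗ[ℤ] ℤ} {d : ℤ} (h : ∀ y, d ∣ φ y) :
    ∃ ψ : L →ₗ[ℤ] ℤ, φ = d • ψ := by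
  choose q hq using h
  rcases eq_or_ne d 0 with rfl | hd
  · exact ⟨0, LinearMap.ext fun y => by simpa using hq y⟩
  · have q_add (x y : L) : q (x + y) = q x + q y :=
      mul_left_cancel₀ hd (by rw [← hq, map_add, hq, hq, mul_add])
    exact ⟨(AddMonoidHom.mk' q q_add).toIntLinearMap, LinearMap.ext hq⟩

theorem exists_eq_smul_of_ne_zero {φ : L →ₗ[ℤ] ℤ} (hφ : φ ≠ 0) :
    ∃ d : ℤ, d ≠ 0 ∧ ∃ ψ : L →ₗ[ℤ] ℤ, φ = d • ψ ∧ ∃ f, ψ f = 1 := by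
  obtain ⟨d, hd⟩ := (IsPrincipalIdealRing.principal (LinearMap.range φ)).principal
  have dvd (y : L) : d ∣ φ y := by
    rw [← Ideal.mem_span_singleton, ← Ideal.submodule_span_eq, ← hd]
    exact LinearMap.mem_range_self φ y
  have hd0 : d ≠ 0 := by
    rintro rfl
    exact hφ (LinearMap.ext fun y => zero_dvd_iff.mp (dvd y))
  obtain ⟨ψ, rfl⟩ := exists_eq_smul_of_forall_dvd dvd
  obtain ⟨f, hf⟩ : d ∈ LinearMap.range (d • ψ) := hd ▸ Submodule.mem_span_singleton_self d
  exact ⟨d, hd0, ψ, rfl, f, mul_left_cancel₀ hd0 (by simpa using hf)⟩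

theorem ker_smul_eq {φ : L →ₗ[ℤ] ℤ} {d : ℤ} (hd : d ≠ 0) :
    LinearMap.ker (d • φ) = LinearMap.ker φ := by
  ext y
  simp [hd]

theorem exists_basis_eq_cons_ker {φ : L →ₗ[ℤ] ℤ} {x : L} (hx : IsUnit (φ x)) {n : ℕ}
    (c : Basis (Fin n) ℤ (LinearMap.ker φ)) :
    ∃ b : Basis (Fin (n + 1)) ℤ L, ⇑b = Fin.cons x fun i => (c i : L) := by
  refine ⟨Basis.mkFinCons x c ?_ ?_, Basis.coe_mkFinCons ..⟩
  · intro a y hy h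
    simpa [hx.ne_zero, LinearMap.mem_ker.mp hy] using congrArg φ h
  · exact fun z => ⟨-(φ z * φ x), by simp [mul_assoc, Int.isUnit_mul_self hx]⟩

theorem finrank_eq_finrank_ker_add_one [Free ℤ L] [Module.Finite ℤ L] {φ : L →ₗ[ℤ] ℤ} {x : L}
    (hx : IsUnit (φ x)) : finrank ℤ L = finrank ℤ (LinearMap.ker φ) + 1 := by
  obtain ⟨b, -⟩ := exists_basis_eq_cons_ker hx (finBasis ℤ (LinearMap.ker φ))
  simpa using finrank_eq_card_basis b

end Functionals

section Discriminant

variable {L : Type*} [AddCommGroup L]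

theorem abs_det_toMatrix_eq {ι : Type*} [Fintype ι] [DecidableEq ι] (b c : Basis ι ℤ L)
    (B : BilinForm ℤ L) : |(LinearMap.BilinForm.toMatrix b B).det| =
      |(LinearMap.BilinForm.toMatrix c B).det| := by
  have hunit : IsUnit (b.toMatrix c).det := by
    rw [← Matrix.isUnit_iff_isUnit_det]
    have := b.invertibleToMatrix c
    exact isUnit_of_invertible _
  rw [← LinearMap.BilinForm.toMatrix_mul_basis_toMatrix b c B, det_mul, det_mul, det_transpose,
    abs_mul, abs_mul, Int.isUnit_iff_abs_eq.mp hunit, one_mul, mul_one]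

variable [Free ℤ L] [Module.Finite ℤ L]

/-- The absolute value of the discriminant of an integral bilinear form: the absolute value of
the determinant of any of its Gram matrices. The Gram matrix used is that of the basis
`Module.finBasis`, see `absDisc_eq` for the independence of this choice. -/
noncomputable def absDisc (B : BilinForm ℤ L) : ℤ :=
  |(LinearMap.BilinForm.toMatrix (finBasis ℤ L) B).det|

theorem absDisc_eq {n : ℕ} (b : Basis (Fin n) ℤ L) (B : BilinForm ℤ L) :
    absDisc B = |(LinearMap.BilinForm.toMatrix b B).det| := by
  obtain rfl : finrank ℤ L = n := by simpa using finrank_eq_card_basis b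
  exact abs_det_toMatrix_eq _ b B

theorem absDisc_nonneg (B : BilinForm ℤ L) : 0 ≤ absDisc B := abs_nonneg _

end Discriminant

section Hermite

-- Gaussian elimination of the zeroth column, carried out without division.
theorem det_of_schur_complement {R : Type*} [CommRing R] {n : ℕ}
    (G : Matrix (Fin (n + 1)) (Fin (n + 1)) R) :
    G 0 0 * (of fun i j : Fin n => G 0 0 * G i.succ j.succ - G i.succ 0 * G 0 j.succ).det =
      G 0 0 ^ n * G.det := by
  set scale : Fin (n + 1) → R := Fin.cons 1 fun _ => G 0 0
  set scaled : Matrix (Fin (n + 1)) (Fin (n + 1)) R := of fun i j => scale i * G i j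
  set cleared : Matrix (Fin (n + 1)) (Fin (n + 1)) R :=
    of (Fin.cons (G 0) fun i j => G 0 0 * G i.succ j - G i.succ 0 * G 0 j)
  have det_scaled : scaled.det = G 0 0 ^ n * G.det := by
    rw [det_mul_column, Fin.prod_univ_succ]
    simp [scale]
  have det_cleared : scaled.det = cleared.det := by
    refine det_eq_of_forall_row_eq_smul_add_const (Fin.cons 0 fun i => G i.succ 0) 0 rfl ?_
    intro i j
    cases i using Fin.cases <;> simp [scaled, cleared, scale]
  have expand_cleared : cleared.det =
      G 0 0 * (of fun i j : Fin n => G 0 0 * G i.succ j.succ - G i.succ 0 * G 0 j.succ).det := by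
    rw [det_succ_column_zero, Fin.sum_univ_succ, Finset.sum_eq_zero]
    · simp only [cleared, of_apply, Fin.cons_zero, Fin.val_zero, pow_zero, one_mul, add_zero]
      rfl
    · intro i _
      simp [cleared, mul_comm (G 0 0)]
  rw [← expand_cleared, ← det_cleared, det_scaled]

theorem exists_two_mul_abs_add_mul_le (a b : ℤ) (ha : a ≠ 0) : ∃ s : ℤ, 2 * |b + s * a| ≤ |a| := by
  obtain ⟨s, hs⟩ : a ∣ b - b.bmod a.natAbs := Int.natAbs_dvd.mp Int.dvd_self_sub_bmod
  have hlow := Int.le_bmod (x := b) (Int.natAbs_pos.mpr ha)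
  have hupp := Int.bmod_le (x := b) (Int.natAbs_pos.mpr ha)
  refine ⟨-s, ?_⟩
  rw [show b + -s * a = b.bmod a.natAbs by linarith, Int.abs_eq_natAbs,
    Int.abs_eq_natAbs]
  omega

variable {L : Type*} [AddCommGroup L]

/-- The form `y, z ↦ B(x, x) B(y, z) - B(x, y) B(x, z)`. Up to the factor `B(x, x)` it is the
form induced by `B` on the projection along `x` to the orthogonal complement of `x`. -/
def projForm (B : BilinForm ℤ L) (x : L) : BilinForm ℤ L :=
  B x x • B - LinearMap.BilinForm.linMulLin (B x) (B x)

@[simp]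
theorem projForm_apply (B : BilinForm ℤ L) (x y z : L) :
    projForm B x y z = B x x * B y z - B x y * B x z := by
  simp [projForm]

theorem isSymm_projForm {B : BilinForm ℤ L} (hB : B.IsSymm) (x : L) : (projForm B x).IsSymm :=
  ⟨fun y z => by simp only [projForm_apply, hB.eq y z]; ring⟩

theorem abs_mul_absDisc_projForm [Free ℤ L] [Module.Finite ℤ L] {B : BilinForm ℤ L}
    (hB : B.IsSymm) {φ : L →ₗ[ℤ] ℤ} {x : L} (hx : φ x = 1) :
    |B x x| * absDisc ((projForm B x).restrict (LinearMap.ker φ)) =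
      |B x x| ^ finrank ℤ (LinearMap.ker φ) * absDisc B := by
  obtain ⟨b, hb⟩ := exists_basis_eq_cons_ker (hx ▸ isUnit_one) (finBasis ℤ (LinearMap.ker φ))
  rw [absDisc_eq b B, absDisc, ← abs_pow, ← abs_mul, ← abs_mul]
  have h := det_of_schur_complement (LinearMap.BilinForm.toMatrix b B)
  simp only [LinearMap.BilinForm.toMatrix_apply, hb, Fin.cons_zero, Fin.cons_succ] at h
  rw [← h]
  congr 3
  ext i j
  simp [hB.eq x (finBasis ℤ (LinearMap.ker φ) i)]

theorem three_mul_sq_le_of_forall_abs_le {B : BilinForm ℤ L} (hB : B.IsSymm) {x y : L}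
    (hmin : ∀ s : ℤ, |B x x| ≤ |B (y + s • x) (y + s • x)|) :
    3 * |B x x| ^ 2 ≤ 4 * |projForm B x y y| := by
  rcases eq_or_ne (B x x) 0 with h0 | h0
  · simp [h0, mul_self_nonneg]
  obtain ⟨s, hs⟩ := exists_two_mul_abs_add_mul_le (B x x) (B x y) h0
  have complete_square : B x x * B (y + s • x) (y + s • x) =
      (B x y + s * B x x) ^ 2 + projForm B x y y := by
    simp only [projForm_apply, map_add, map_smul, LinearMap.add_apply, LinearMap.smul_apply,
      smul_eq_mul, hB.eq y x]
    ring
  have hsq : 4 * (B x y + s * B x x) ^ 2 ≤ |B x x| ^ 2 := by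
    rw [← sq_abs (B x y + s * B x x)]
    nlinarith [abs_nonneg (B x y + s * B x x)]
  have hmul : |B x x| ^ 2 ≤ |B x x * B (y + s • x) (y + s • x)| := by
    rw [abs_mul, sq]
    exact mul_le_mul_of_nonneg_left (hmin s) (abs_nonneg _)
  rw [complete_square] at hmul
  have htri := abs_add_le ((B x y + s * B x x) ^ 2) (projForm B x y y)
  rw [abs_of_nonneg (sq_nonneg (B x y + s * B x x))] at htri
  linarith

/-- A vector of a `ℤ`-lattice is primitive if it takes the value `1` under some integral
functional; in a free module of finite rank this means that it belongs to a basis. -/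
def IsPrimitiveVector (v : L) : Prop := ∃ φ : L →ₗ[ℤ] ℤ, φ v = 1

theorem IsPrimitiveVector.ne_zero {v : L} (hv : IsPrimitiveVector v) : v ≠ 0 := by
  rintro rfl
  obtain ⟨φ, hφ⟩ := hv
  simp at hφ

theorem isPrimitiveVector_basis {ι : Type*} (b : Basis ι ℤ L) (i : ι) : IsPrimitiveVector (b i) :=
  ⟨b.coord i, by simp⟩

theorem IsPrimitiveVector.add_smul {φ : L →ₗ[ℤ] ℤ} {x : L} (hx : φ x = 1) {y : LinearMap.ker φ}
    (hy : IsPrimitiveVector y) (s : ℤ) : IsPrimitiveVector ((y : L) + s • x) := by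
  obtain ⟨ψ, hψ⟩ := hy
  let projKer : L →ₗ[ℤ] LinearMap.ker φ :=
    (LinearMap.id - φ.smulRight x).codRestrict _ fun z => by simp [hx]
  have hproj : projKer (y + s • x) = y := by
    apply Subtype.ext
    change (y : L) + s • x - φ (y + s • x) • x = y
    simp [hx]
  exact ⟨ψ ∘ₗ projKer, by simp [hproj, hψ]⟩

theorem exists_isPrimitiveVector_abs_le [Free ℤ L] [Nontrivial L] (B : BilinForm ℤ L) :
    ∃ x, IsPrimitiveVector x ∧ ∀ v, IsPrimitiveVector v → |B x x| ≤ |B v v| := by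
  obtain ⟨i⟩ := (Free.chooseBasis ℤ L).index_nonempty
  obtain ⟨x, hx, hmin⟩ := WellFounded.has_min (measure fun v => (B v v).natAbs).wf
    {v | IsPrimitiveVector v} ⟨_, isPrimitiveVector_basis (Free.chooseBasis ℤ L) i⟩
  refine ⟨x, hx, fun v hv => ?_⟩
  rw [Int.abs_eq_natAbs, Int.abs_eq_natAbs]
  exact_mod_cast not_lt.mp (hmin v hv)

theorem hermite_bound_succ {k : ℕ} {a c D E : ℤ} (ha : 0 < a) (hac : 3 * a ^ 2 ≤ 4 * c)
    (hE : a * E = a ^ (k + 1) * D)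
    (hc : 3 ^ (k + 1).choose 2 * c ^ (k + 1) ≤ 4 ^ (k + 1).choose 2 * E) :
    3 ^ (k + 2).choose 2 * a ^ (k + 2) ≤ 4 ^ (k + 2).choose 2 * D := by
  have hE' : E = a ^ k * D := mul_left_cancel₀ ha.ne' (by rw [hE]; ring)
  have hpow : 3 ^ (k + 1) * (a ^ 2) ^ (k + 1) ≤ 4 ^ (k + 1) * c ^ (k + 1) := by
    rw [← mul_pow, ← mul_pow]
    exact pow_le_pow_left₀ (by positivity) hac _
  have hchoose : (k + 2).choose 2 = (k + 1) + (k + 1).choose 2 := by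
    rw [Nat.choose_succ_succ' (k + 1) 1, Nat.choose_one_right]
  refine le_of_mul_le_mul_left ?_ (pow_pos ha k)
  calc a ^ k * (3 ^ (k + 2).choose 2 * a ^ (k + 2))
      = 3 ^ (k + 1).choose 2 * (3 ^ (k + 1) * (a ^ 2) ^ (k + 1)) := by rw [hchoose]; ring
    _ ≤ 3 ^ (k + 1).choose 2 * (4 ^ (k + 1) * c ^ (k + 1)) := by gcongr
    _ = 4 ^ (k + 1) * (3 ^ (k + 1).choose 2 * c ^ (k + 1)) := by ring
    _ ≤ 4 ^ (k + 1) * (4 ^ (k + 1).choose 2 * E) := by gcongr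
    _ = a ^ k * (4 ^ (k + 2).choose 2 * D) := by rw [hchoose, hE']; ring

end Hermite

/-- Hermite's bound `|B v v| ≤ (4 / 3) ^ ((r - 1) / 2) * |disc B| ^ (1 / r)` in rank `r = n + 1`. -/
theorem exists_isPrimitiveVector_pow_le_absDisc {n : ℕ} {L : Type*} [AddCommGroup L] [Free ℤ L]
    [Module.Finite ℤ L] {B : BilinForm ℤ L} (hB : B.IsSymm) (hn : finrank ℤ L = n + 1) :
    ∃ v, IsPrimitiveVector v ∧
      3 ^ (n + 1).choose 2 * |B v v| ^ (n + 1) ≤ 4 ^ (n + 1).choose 2 * absDisc B := by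
  induction n generalizing L with
  | zero =>
    let b : Basis (Fin 1) ℤ L := finBasisOfFinrankEq ℤ L hn
    refine ⟨b 0, isPrimitiveVector_basis b 0, ?_⟩
    simp [absDisc_eq b, LinearMap.BilinForm.toMatrix_apply]
  | succ k ih =>
    have : Nontrivial L := nontrivial_of_finrank_eq_succ hn
    obtain ⟨x, ⟨φ, hφ⟩, hmin⟩ := exists_isPrimitiveVector_abs_le B
    refine ⟨x, ⟨φ, hφ⟩, ?_⟩
    rcases eq_or_ne (B x x) 0 with h0 | h0
    · simp [h0, absDisc_nonneg]
    have hker : finrank ℤ (LinearMap.ker φ) = k + 1 := by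
      rw [finrank_eq_finrank_ker_add_one (hφ ▸ isUnit_one)] at hn
      omega
    obtain ⟨y, hy, hbound⟩ := ih ((isSymm_projForm hB x).restrict _) hker
    have hxy : 3 * |B x x| ^ 2 ≤ 4 * |projForm B x y y| :=
      three_mul_sq_le_of_forall_abs_le hB fun s => hmin _ (hy.add_smul hφ s)
    exact hermite_bound_succ (abs_pos.mpr h0) hxy (hker ▸ abs_mul_absDisc_projForm hB hφ) hbound

section OrthogonalComplement

variable {L : Type*} [AddCommGroup L] [Free ℤ L] [Module.Finite ℤ L] {B : BilinForm ℤ L}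

-- With respect to a basis `f, c₁, …, cₙ`, where `c` spans the kernel, the coordinate row `z` of `x`
-- satisfies `z G = (d, 0, …, 0)`; multiply by the adjugate of `G`.
theorem sq_mul_absDisc_restrict_ker {x f : L} {d : ℤ} {ψ : L →ₗ[ℤ] ℤ} (hx : B x = d • ψ)
    (hf : ψ f = 1) : d ^ 2 * absDisc (B.restrict (LinearMap.ker ψ)) = |B x x| * absDisc B := by
  set c := finBasis ℤ (LinearMap.ker ψ)
  obtain ⟨b, hb⟩ := exists_basis_eq_cons_ker (hf ▸ isUnit_one) c
  set G := LinearMap.BilinForm.toMatrix b B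
  set z : Fin _ → ℤ := ⇑(b.repr x)
  have hψ : ψ x = z 0 := by
    rw [← b.sum_repr x, map_sum, Fin.sum_univ_succ]
    simp [hb, hf, z]
  have hz : z ᵥ* G = Pi.single 0 d := by
    ext j
    have hBj : (z ᵥ* G) j = B x (b j) := by
      conv_rhs => rw [← b.sum_repr x]
      simp only [vecMul, dotProduct, G, LinearMap.BilinForm.toMatrix_apply, z, map_sum, map_smul,
        LinearMap.sum_apply, LinearMap.smul_apply, smul_eq_mul]
    rw [hBj, hx]
    cases j using Fin.cases <;> simp [hb, hf]
  have hadj : G.adjugate 0 0 = (LinearMap.BilinForm.toMatrix c (B.restrict _)).det := by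
    rw [adjugate_fin_succ_eq_det_submatrix]
    simp only [Fin.val_zero, add_zero, pow_zero, one_mul]
    congr 1
    ext i j
    simp [G, LinearMap.BilinForm.toMatrix_apply, hb]
  have key : d * G.adjugate 0 0 = G.det * z 0 := by
    have h : z ᵥ* G ᵥ* G.adjugate = G.det • z := by
      rw [vecMul_vecMul, mul_adjugate, vecMul_smul, vecMul_one]
    simpa [hz] using congrFun h 0
  calc d ^ 2 * absDisc (B.restrict (LinearMap.ker ψ))
      = |d * (d * G.adjugate 0 0)| := by rw [absDisc, ← hadj, ← mul_assoc, abs_mul, ← sq, abs_sq]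
    _ = |B x x * G.det| := by rw [key, hx, LinearMap.smul_apply, hψ, smul_eq_mul]; ring_nf
    _ = |B x x| * absDisc B := by rw [abs_mul, absDisc_eq b]

theorem finrank_eq_finrank_ker_apply_add_one {x : L} (hx : B x x ≠ 0) :
    finrank ℤ L = finrank ℤ (LinearMap.ker (B x)) + 1 := by
  obtain ⟨d, hd, ψ, hψ, f, hf⟩ := exists_eq_smul_of_ne_zero fun h : B x = 0 => hx (by simp [h])
  rw [hψ, ker_smul_eq hd]
  exact finrank_eq_finrank_ker_add_one (hf ▸ isUnit_one)

theorem absDisc_restrict_ker_apply_le {x : L} (hx : B x x ≠ 0) :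
    absDisc (B.restrict (LinearMap.ker (B x))) ≤ |B x x| * absDisc B := by
  obtain ⟨d, hd, ψ, hψ, f, hf⟩ := exists_eq_smul_of_ne_zero fun h : B x = 0 => hx (by simp [h])
  rw [← sq_mul_absDisc_restrict_ker hψ hf, hψ, ker_smul_eq hd]
  exact le_mul_of_one_le_left (absDisc_nonneg _) (Int.add_one_le_of_lt (sq_pos_of_ne_zero hd))

end OrthogonalComplement

section ShortVectors

theorem exists_ne_zero_abs_lt {r : ℕ} {L : Type*} [AddCommGroup L] [Free ℤ L]
    [Module.Finite ℤ L] {B : BilinForm ℤ L} (hB : B.IsSymm) (hr : finrank ℤ L = r) (hr0 : 0 < r)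
    {c m : ℤ} (hm : 0 ≤ m) (hc : absDisc B ≤ c)
    (hbound : 4 ^ r.choose 2 * c < 3 ^ r.choose 2 * m ^ r) : ∃ v ≠ 0, |B v v| < m := by
  obtain ⟨n, rfl⟩ := Nat.exists_eq_add_one.mpr hr0
  obtain ⟨v, hv, hle⟩ := exists_isPrimitiveVector_pow_le_absDisc hB hr
  refine ⟨v, hv.ne_zero, lt_of_pow_lt_pow_left₀ (n + 1) hm ?_⟩
  refine lt_of_mul_lt_mul_left (a := 3 ^ (n + 1).choose 2) ?_ (by positivity)
  calc 3 ^ (n + 1).choose 2 * |B v v| ^ (n + 1)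
      ≤ 4 ^ (n + 1).choose 2 * absDisc B := hle
    _ ≤ 4 ^ (n + 1).choose 2 * c := by gcongr
    _ < 3 ^ (n + 1).choose 2 * m ^ (n + 1) := hbound

theorem exists_orthogonal_abs_lt {k r : ℕ} {L : Type*} [AddCommGroup L] [Free ℤ L]
    [Module.Finite ℤ L] {B : BilinForm ℤ L} (hB : B.IsSymm) (haniso : ∀ v, B v v = 0 → v = 0)
    (hr : finrank ℤ L = r) (hk : k ≤ r) {c m : ℤ} (hm : 1 ≤ m) (hc : absDisc B ≤ c)
    (hbound : ∀ j < k, 4 ^ (r - j).choose 2 * ((m - 1) ^ j * c) <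
      3 ^ (r - j).choose 2 * m ^ (r - j)) :
    ∃ x : Fin k → L, (∀ i, x i ≠ 0 ∧ |B (x i) (x i)| < m) ∧
      Pairwise fun i j => B (x i) (x j) = 0 := by
  induction k generalizing L r c with
  | zero => exact ⟨Fin.elim0, fun i => i.elim0, fun i => i.elim0⟩
  | succ k ih =>
    obtain ⟨v, hv, hvm⟩ := exists_ne_zero_abs_lt hB hr (by omega) (zero_le_one.trans hm) hc
      (by simpa using hbound 0 k.succ_pos)
    have hvv : B v v ≠ 0 := mt (haniso v) hv
    have hrank : finrank ℤ (LinearMap.ker (B v)) = r - 1 := by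
      have := finrank_eq_finrank_ker_apply_add_one hvv
      omega
    have hdisc : absDisc (B.restrict (LinearMap.ker (B v))) ≤ (m - 1) * c :=
      (absDisc_restrict_ker_apply_le hvv).trans
        (mul_le_mul (by omega) hc (absDisc_nonneg B) (by omega))
    obtain ⟨x, hx, horth⟩ := ih (hB.restrict _) (fun w hw => Subtype.ext (haniso w hw)) hrank
      (by omega) hdisc fun j hj => by
        have := hbound (j + 1) (by omega)
        rwa [pow_succ, mul_assoc, show r - (j + 1) = r - 1 - j by omega] at this
    have hvx (i : Fin k) : B v (x i) = 0 := (x i).2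
    refine ⟨Fin.cons v fun i => x i, ?_, ?_⟩
    · refine Fin.cases ⟨hv, hvm⟩ fun i => ?_
      exact ⟨fun h => (hx i).1 (Subtype.ext h), (hx i).2⟩
    · refine fun i j => Fin.cases ?_ (fun i => ?_) i
      · exact Fin.cases (fun h => absurd rfl h) (fun j _ => by simp [hvx]) j
      · refine Fin.cases (fun _ => ?_) (fun j h => ?_) j
        · simpa using (hB.eq _ _).trans (hvx i)
        · simpa using horth (fun e => h (congrArg Fin.succ e))

end ShortVectors

section Unimodular

variable {L : Type*} [AddCommGroup L] {B : BilinForm ℤ L}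

/-- A unimodular form: a symmetric integral form for which every integral functional on `L` is
of the form `B x`. On a free module of finite rank this says that the Gram determinant is `±1`. -/
structure IsUnimodular (B : BilinForm ℤ L) : Prop where
  isSymm : B.IsSymm
  surjective : Function.Surjective B

namespace IsUnimodular

theorem absDisc_eq_one [Free ℤ L] [Module.Finite ℤ L] (hB : IsUnimodular B) : absDisc B = 1 := by
  set b := finBasis ℤ L
  choose dual hdual using fun j => hB.surjective (b.coord j)
  have hmul : of (fun i j => b.repr (dual i) j) * LinearMap.BilinForm.toMatrix b B = 1 := by
    ext i j
    have hij : B (dual i) (b j) = (1 : Matrix _ _ ℤ) i j := by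
      simp [hdual, one_apply, Finsupp.single_apply, eq_comm]
    rw [← hij, mul_apply]
    conv_rhs => rw [← b.sum_repr (dual i)]
    simp only [of_apply, LinearMap.BilinForm.toMatrix_apply, map_sum, map_smul,
      LinearMap.sum_apply, LinearMap.smul_apply, smul_eq_mul]
  have hdet := congrArg det hmul
  rw [det_mul, det_one] at hdet
  exact Int.isUnit_iff_abs_eq.mp (IsUnit.of_mul_eq_one_right _ hdet)

theorem injective [Free ℤ L] (hB : IsUnimodular B) : Function.Injective B := by
  rw [injective_iff_map_eq_zero]
  intro x hx
  rw [← Module.forall_dual_apply_eq_zero_iff ℤ x]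
  intro φ
  obtain ⟨y, rfl⟩ := hB.surjective φ
  rw [hB.isSymm.eq, hx, LinearMap.zero_apply]

theorem exists_eq_smul_of_apply_eq_smul [Free ℤ L] (hB : IsUnimodular B) {x : L} {d : ℤ}
    {ψ : L →ₗ[ℤ] ℤ} (hx : B x = d • ψ) : ∃ e, x = d • e ∧ B e = ψ := by
  obtain ⟨e, rfl⟩ := hB.surjective ψ
  exact ⟨e, hB.injective (by rw [hx, map_smul]), rfl⟩

theorem exists_isotropic_apply_eq_one [Free ℤ L] (hB : IsUnimodular B) {z : L} (hz : z ≠ 0)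
    (hzz : B z z = 0) : ∃ e f, B e e = 0 ∧ B e f = 1 := by
  have hBz : B z ≠ 0 := (map_ne_zero_iff B hB.injective).mpr hz
  obtain ⟨d, hd, ψ, hψ, f, hf⟩ := exists_eq_smul_of_ne_zero hBz
  obtain ⟨e, rfl, rfl⟩ := hB.exists_eq_smul_of_apply_eq_smul hψ
  exact ⟨e, f, by simpa [hd] using hzz, hf⟩

theorem restrict (hB : IsUnimodular B) {N : Submodule ℤ L} (π : L →ₗ[ℤ] N)
    (hπ : ∀ n : N, π n = n) (hBπ : ∀ x, ∀ n : N, B (π x) n = B x n) :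
    IsUnimodular (B.restrict N) := by
  refine ⟨hB.isSymm.restrict N, fun φ => ?_⟩
  obtain ⟨y, hy⟩ := hB.surjective (φ ∘ₗ π)
  refine ⟨π y, LinearMap.ext fun n => ?_⟩
  calc B (π y) n = B y n := hBπ y n
    _ = φ n := by rw [hy, LinearMap.comp_apply, hπ]

theorem restrict_ker (hB : IsUnimodular B) {x : L} (hx : IsUnit (B x x)) :
    IsUnimodular (B.restrict (LinearMap.ker (B x))) := by
  have hsq : B x x * B x x = 1 := Int.isUnit_mul_self hx
  let proj : L →ₗ[ℤ] L := LinearMap.id - (B x x • B x).smulRight x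
  have proj_mem (y : L) : proj y ∈ LinearMap.ker (B x) := by
    rw [LinearMap.mem_ker]
    simp only [proj, LinearMap.sub_apply, LinearMap.id_apply, LinearMap.smulRight_apply,
      LinearMap.smul_apply, map_sub, map_smul, smul_eq_mul]
    linear_combination -B x y * hsq
  refine hB.restrict (proj.codRestrict _ proj_mem) ?_ ?_
  · rintro ⟨n, hn⟩
    apply Subtype.ext
    change n - (B x x * B x n) • x = n
    simp [LinearMap.mem_ker.mp hn]
  · rintro y ⟨n, hn⟩
    change B (y - (B x x * B x y) • x) n = B y n
    simp [LinearMap.mem_ker.mp hn]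

end IsUnimodular

end Unimodular

section Lorentzian

variable {L : Type*} [AddCommGroup L] {B : BilinForm ℤ L}

/-- A negative definite form. -/
def IsNegDef (B : BilinForm ℤ L) : Prop := ∀ y, y ≠ 0 → B y y < 0

/-- A form of signature `(1, n)`, expressed without extension of scalars: there is a vector of
positive norm, and the orthogonal complement of any such vector is negative definite. -/
structure IsLorentzian (B : BilinForm ℤ L) : Prop where
  exists_pos : ∃ u, 0 < B u u
  isNegDef_restrict_ker : ∀ u, 0 < B u u → IsNegDef (B.restrict (LinearMap.ker (B u)))

namespace IsLorentzian

theorem neg_of_apply_eq_zero (hL : IsLorentzian B) {u y : L} (hu : 0 < B u u) (huy : B u y = 0)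
    (hy : y ≠ 0) : B y y < 0 :=
  hL.isNegDef_restrict_ker u hu ⟨y, huy⟩ fun h => hy (congrArg Subtype.val h)

theorem of_isNegDef_restrict_ker (hB : B.IsSymm) {u : L} (hu : 0 < B u u)
    (hneg : IsNegDef (B.restrict (LinearMap.ker (B u)))) : IsLorentzian B := by
  refine ⟨⟨u, hu⟩, ?_⟩
  rintro v hv ⟨y, hvy⟩ hy
  have hvy : B v y = 0 := hvy
  change B y y < 0
  by_contra! hyy
  have neg_ker (w : L) (hw : B u w = 0) (hw0 : w ≠ 0) : B w w < 0 :=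
    hneg ⟨w, hw⟩ fun h => hw0 (congrArg Subtype.val h)
  have huy : B u y ≠ 0 := fun h => hyy.not_gt (neg_ker y h fun h0 => hy (Subtype.ext h0))
  set w := B u y • v - B u v • y
  have hw : B u w = 0 := by
    simp only [w, map_sub, map_smul, smul_eq_mul]
    ring
  have hww : 0 < B w w := by
    calc 0 < B u y ^ 2 * B v v + B u v ^ 2 * B y y := by positivity
      _ = B w w := by
        simp only [w, map_sub, map_smul, LinearMap.sub_apply, LinearMap.smul_apply, smul_eq_mul,
          hvy, hB.eq y v]
        ring
  exact hww.not_gt (neg_ker w hw fun h => by simp [h] at hww)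

theorem restrict_ker (hL : IsLorentzian B) (hB : B.IsSymm) {w : L} (hw : B w w < 0) :
    IsLorentzian (B.restrict (LinearMap.ker (B w))) := by
  obtain ⟨u, hu⟩ := hL.exists_pos
  set v := B w w • u - B w u • w
  have hv : B w v = 0 := by
    simp only [v, map_sub, map_smul, smul_eq_mul]
    ring
  have hvv : B v v = B w w ^ 2 * B u u + -B w w * B w u ^ 2 := by
    simp only [v, map_sub, map_smul, LinearMap.sub_apply, LinearMap.smul_apply, smul_eq_mul,
      hB.eq u w]
    ring
  have hpos : 0 < B v v := by
    have hne : B w w ≠ 0 := hw.ne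
    have hneg : 0 < -B w w := neg_pos.mpr hw
    rw [hvv]
    positivity
  refine ⟨⟨⟨v, hv⟩, hpos⟩, ?_⟩
  rintro x hx ⟨y, hxy⟩ hy
  exact hL.neg_of_apply_eq_zero hx hxy fun h => hy (Subtype.ext (Subtype.ext h))

end IsLorentzian

end Lorentzian

section Diagonalization

theorem IsUnimodular.exists_norm_neg_one_or_neg_two {L : Type*} [AddCommGroup L] [Free ℤ L]
    [Module.Finite ℤ L] {B : BilinForm ℤ L} (hB : IsUnimodular B) (hneg : IsNegDef B)
    (hpos : 0 < finrank ℤ L) (hle : finrank ℤ L ≤ 8) :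
    (∃ v, B v v = -1) ∨ ∃ v w, B v v = -2 ∧ B w w = -2 ∧ B v w = 0 := by
  obtain hr | hr : finrank ℤ L = 1 ∨ 2 ≤ finrank ℤ L := by omega
  · obtain ⟨v, hv, hlt⟩ := exists_ne_zero_abs_lt (m := 2) hB.isSymm hr one_pos (by norm_num)
      hB.absDisc_eq_one.le (by norm_num)
    exact Or.inl ⟨v, by have := hneg v hv; have := abs_lt.mp hlt; omega⟩
  · have haniso (v : L) (hv : B v v = 0) : v = 0 := by
      by_contra h
      exact (hneg v h).ne hv
    obtain ⟨x, hx, horth⟩ := exists_orthogonal_abs_lt (k := 2) (m := 3) hB.isSymm haniso rfl hr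
      (by norm_num) hB.absDisc_eq_one.le (by
        intro j hj
        interval_cases j <;> interval_cases finrank ℤ L <;> norm_num [Nat.choose_two_right])
    have hnorm (i : Fin 2) : B (x i) (x i) = -1 ∨ B (x i) (x i) = -2 := by
      have := hneg _ (hx i).1
      have := abs_lt.mp (hx i).2
      omega
    rcases hnorm 0 with h0 | h0
    · exact Or.inl ⟨_, h0⟩
    rcases hnorm 1 with h1 | h1
    · exact Or.inl ⟨_, h1⟩
    · exact Or.inr ⟨_, _, h0, h1, horth zero_ne_one⟩

theorem IsLorentzian.exists_isotropic_of_norm_one {L : Type*} [AddCommGroup L] [Free ℤ L]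
    [Module.Finite ℤ L] {B : BilinForm ℤ L} (hL : IsLorentzian B) (hB : IsUnimodular B)
    (hlow : 2 ≤ finrank ℤ L) (hupp : finrank ℤ L ≤ 9) {x : L} (hx : B x x = 1) :
    ∃ z, z ≠ 0 ∧ B z z = 0 := by
  have hunit : IsUnit (B x x) := hx ▸ isUnit_one
  have hrank := finrank_eq_finrank_ker_add_one hunit
  have norm_smul_add (c : ℤ) (v : L) (hv : B x v = 0) :
      B (c • x + v) (c • x + v) = c ^ 2 + B v v := by
    simp only [map_add, map_smul, LinearMap.add_apply, LinearMap.smul_apply, smul_eq_mul, hx, hv,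
      hB.isSymm.eq v x]
    ring
  have smul_add_ne_zero (c : ℤ) (hc : c ≠ 0) (v : L) (hv : B x v = 0) : c • x + v ≠ 0 := by
    intro h
    simpa [hx, hv, hc] using congrArg (B x) h
  rcases (hB.restrict_ker hunit).exists_norm_neg_one_or_neg_two
      (hL.isNegDef_restrict_ker x (hx ▸ one_pos)) (by omega) (by omega) with
    ⟨⟨v, hv⟩, hvv : B v v = -1⟩ | ⟨⟨v, hv⟩, ⟨w, hw⟩, hvv : B v v = -2, hww : B w w = -2,
      hvw : B v w = 0⟩
  · exact ⟨_, smul_add_ne_zero 1 one_ne_zero v hv, by rw [norm_smul_add 1 v hv, hvv]; norm_num⟩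
  · have hvw' : B x (v + w) = 0 := by rw [map_add, hv, hw, add_zero]
    refine ⟨_, smul_add_ne_zero 2 two_ne_zero _ hvw', ?_⟩
    rw [norm_smul_add 2 _ hvw']
    simp [hvv, hww, hvw, hB.isSymm.eq w v]

theorem IsUnimodular.exists_norm_one_orthogonal_neg_one {L : Type*} [AddCommGroup L] [Free ℤ L]
    {B : BilinForm ℤ L} (hB : IsUnimodular B) {x z : L} (hx : Odd (B x x)) (hz : z ≠ 0)
    (hzz : B z z = 0) : ∃ u w, B u u = 1 ∧ B w w = -1 ∧ B w u = 0 := by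
  obtain ⟨e, f, hee, hef⟩ := hB.exists_isotropic_apply_eq_one hz hzz
  obtain ⟨g, heg, k, hk⟩ : ∃ g, B e g = 1 ∧ Odd (B g g) := by
    rcases Int.even_or_odd (B f f) with hf | hf
    · refine ⟨x + (1 - B e x) • f, by simp [hef], ?_⟩
      have hnorm : B (x + (1 - B e x) • f) (x + (1 - B e x) • f) =
          B x x + 2 * ((1 - B e x) * B x f) + (1 - B e x) ^ 2 * B f f := by
        simp only [map_add, map_smul, LinearMap.add_apply, LinearMap.smul_apply, smul_eq_mul,
          hB.isSymm.eq f x]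
        ring
      rw [hnorm]
      exact (hx.add_even (even_two_mul _)).add_even (hf.mul_left _)
    · exact ⟨f, hef, hf⟩
  have hge : B g e = 1 := by rw [hB.isSymm.eq, heg]
  refine ⟨g - k • e, g - (k + 1) • e, ?_, ?_, ?_⟩ <;>
  · simp only [map_sub, map_smul, LinearMap.sub_apply, LinearMap.smul_apply, smul_eq_mul, hee, heg,
      hge, hk]
    ring

/-- The diagonal entries of the standard Lorentzian form on `ℤⁿ⁺¹`; the positive one comes last. -/
def lorentzSign (n : ℕ) (i : Fin (n + 1)) : ℤ := if i = Fin.last n then 1 else -1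

theorem IsLorentzian.exists_diagonal_basis {n : ℕ} (hn : n ≤ 8) {L : Type*} [AddCommGroup L]
    [Free ℤ L] [Module.Finite ℤ L] {B : BilinForm ℤ L} (hL : IsLorentzian B) (hB : IsUnimodular B)
    (hr : finrank ℤ L = n + 1) (hx : ∃ x, B x x = 1) :
    ∃ b : Basis (Fin (n + 1)) ℤ L, ∀ i j, B (b i) (b j) = diagonal (lorentzSign n) i j := by
  induction n generalizing L with
  | zero =>
    obtain ⟨x, hx⟩ := hx
    have hunit : IsUnit (B x x) := hx ▸ isUnit_one
    have hker : finrank ℤ (LinearMap.ker (B x)) = 0 := by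
      have := finrank_eq_finrank_ker_add_one hunit
      omega
    obtain ⟨b, hb⟩ := exists_basis_eq_cons_ker hunit (finBasisOfFinrankEq ℤ _ hker)
    refine ⟨b, fun i j => ?_⟩
    rw [Fin.fin_one_eq_zero i, Fin.fin_one_eq_zero j, hb]
    simp [hx, lorentzSign]
  | succ n ih =>
    obtain ⟨x, hx⟩ := hx
    obtain ⟨z, hz, hzz⟩ := hL.exists_isotropic_of_norm_one hB (by omega) (by omega) hx
    obtain ⟨u, w, hu, hw, hwu⟩ :=
      hB.exists_norm_one_orthogonal_neg_one (hx ▸ odd_one) hz hzz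
    have hunit : IsUnit (B w w) := hw ▸ isUnit_one.neg
    have hker : finrank ℤ (LinearMap.ker (B w)) = n + 1 := by
      have := finrank_eq_finrank_ker_add_one hunit
      omega
    obtain ⟨c, hc⟩ := ih (by omega) (hL.restrict_ker hB.isSymm (by omega))
      (hB.restrict_ker hunit) hker ⟨⟨u, hwu⟩, hu⟩
    obtain ⟨b, hb⟩ := exists_basis_eq_cons_ker hunit c
    have hwc (i : Fin (n + 1)) : B w (c i) = 0 := (c i).2
    refine ⟨b, fun i j => ?_⟩
    rw [hb]
    cases i using Fin.cases with
    | zero =>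
      cases j using Fin.cases with
      | zero => simp [hw, lorentzSign, Fin.ext_iff]
      | succ j => simp [hwc, diagonal_apply_ne _ (Fin.succ_ne_zero j).symm]
    | succ i =>
      cases j using Fin.cases with
      | zero => simp [hB.isSymm.eq _ w, hwc]
      | succ j =>
        refine (hc i j).trans ?_
        simp [diagonal_apply, lorentzSign, ← Fin.succ_last]

end Diagonalization

section EvenIsotropic

section OrthogonalFamily

variable {ι L : Type*} [AddCommGroup L] {B : BilinForm ℤ L} {x : ι → L} {m : ℤ}

theorem apply_sum_smul_of_orthogonal [Fintype ι] (hx : ∀ i, B (x i) (x i) = m)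
    (horth : Pairwise fun i j => B (x i) (x j) = 0) (a : ι → ℤ) (j : ι) :
    B (∑ i, a i • x i) (x j) = m * a j := by
  rw [map_sum, LinearMap.sum_apply, Finset.sum_eq_single j]
  · simp [hx, mul_comm]
  · intro i _ hij
    simp [horth hij]
  · simp

theorem norm_sum_smul_of_orthogonal [Fintype ι] (hx : ∀ i, B (x i) (x i) = m)
    (horth : Pairwise fun i j => B (x i) (x j) = 0) (a : ι → ℤ) :
    B (∑ i, a i • x i) (∑ i, a i • x i) = m * ∑ i, a i ^ 2 := by
  rw [map_sum, Finset.mul_sum]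
  refine Finset.sum_congr rfl fun j _ => ?_
  rw [map_smul, apply_sum_smul_of_orthogonal hx horth, smul_eq_mul]
  ring

theorem exists_orthogonal_norm_eq_two_mul [Finite ι] (hB : B.IsSymm)
    (hx : ∀ i, B (x i) (x i) = -2) (horth : Pairwise fun i j => B (x i) (x j) = 0) {v : L}
    (hv : 0 < B v v) :
    ∃ (p : L) (k : ℕ), 0 < k ∧ B p p = 2 * k ∧ ∀ i, B p (x i) = 0 := by
  have := Fintype.ofFinite ι
  set p := (2 : ℤ) • v + ∑ i, B v (x i) • x i with hp
  have hpx (j : ι) : B p (x j) = 0 := by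
    rw [hp, map_add, LinearMap.add_apply, apply_sum_smul_of_orthogonal hx horth]
    simp
  have hpv : B p v = 2 * B v v + ∑ i, B v (x i) ^ 2 := by
    rw [hB.eq, hp]
    simp [sq]
  have hpp : B p p = 2 * B p v := by
    conv_lhs => enter [2]; rw [hp]
    simp [hpx]
  have hpos : 0 < B p v := by
    rw [hpv]
    positivity
  exact ⟨p, (B p v).toNat, by omega, by rw [hpp, Int.toNat_of_nonneg hpos.le], hpx⟩

end OrthogonalFamily

theorem exists_isotropic_of_four_norm_neg_two {L : Type*} [AddCommGroup L] {B : BilinForm ℤ L}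
    (hB : B.IsSymm) {x : Fin 4 → L} (hx : ∀ i, B (x i) (x i) = -2)
    (horth : Pairwise fun i j => B (x i) (x j) = 0) {v : L} (hv : 0 < B v v) :
    ∃ z, z ≠ 0 ∧ B z z = 0 := by
  obtain ⟨p, k, hk, hpp, hpx⟩ := exists_orthogonal_norm_eq_two_mul hB hx horth hv
  obtain ⟨a, b, c, d, habcd⟩ := Nat.sum_four_squares k
  let coeff : Fin 4 → ℤ := ![a, b, c, d]
  have hcoeff : ∑ i, coeff i ^ 2 = k := by
    rw [← habcd]
    simp [coeff, Fin.sum_univ_four]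
  set q := ∑ i, coeff i • x i
  have hpq : B p q = 0 := by simp [q, hpx]
  have hqq : B q q = -2 * k := by rw [norm_sum_smul_of_orthogonal hx horth, hcoeff]
  refine ⟨p + q, fun h => ?_, ?_⟩
  · have := congrArg (B p) h
    rw [map_add, hpp, hpq, map_zero] at this
    omega
  · simp only [map_add, LinearMap.add_apply, hpp, hqq, hB.eq q p, hpq]
    ring

theorem IsLorentzian.exists_isotropic_of_even {L : Type*} [AddCommGroup L] [Free ℤ L]
    [Module.Finite ℤ L] {B : BilinForm ℤ L} (hL : IsLorentzian B) (hB : IsUnimodular B)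
    (heven : ∀ v, Even (B v v)) (hr : finrank ℤ L = 10) : ∃ z, z ≠ 0 ∧ B z z = 0 := by
  by_contra! haniso
  obtain ⟨x, hx, horth⟩ := exists_orthogonal_abs_lt (k := 4) (m := 4) hB.isSymm
    (fun v hv => by_contra fun h => haniso v h hv) hr (by norm_num) (by norm_num)
    hB.absDisc_eq_one.le (by intro j hj; interval_cases j <;> norm_num [Nat.choose_two_right])
  have hnorm (i : Fin 4) : B (x i) (x i) = 2 ∨ B (x i) (x i) = -2 := by
    obtain ⟨k, hk⟩ := heven (x i)
    have := haniso _ (hx i).1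
    have := abs_lt.mp (hx i).2
    omega
  have opposite (i j : Fin 4) (hi : B (x i) (x i) = 2) (hij : i ≠ j) : False := by
    have hxij : B (x i) (x j) = 0 := horth hij
    have hj : B (x j) (x j) < 0 := hL.neg_of_apply_eq_zero (by omega) hxij (hx j).1
    refine haniso (x i + x j) (fun h => ?_) ?_
    · simpa [hi, hxij] using congrArg (B (x i)) h
    · have := (hnorm j).resolve_left (by omega)
      simp [hxij, hB.isSymm.eq (x j), hi, this]
  have hneg (i : Fin 4) : B (x i) (x i) = -2 := by
    obtain ⟨j, hj⟩ := exists_ne i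
    exact (hnorm i).resolve_left fun h => opposite i j h hj.symm
  obtain ⟨v, hv⟩ := hL.exists_pos
  obtain ⟨z, hz, hzz⟩ := exists_isotropic_of_four_norm_neg_two hB.isSymm hneg horth hv
  exact haniso z hz hzz

end EvenIsotropic

section OrthogonalSums

variable {M M' : Type*} [AddCommGroup M'] [AddCommGroup M]

/-- The orthogonal sum `⟨1⟩ ⊕ M`. -/
def oneSum (B : BilinForm ℤ M) : BilinForm ℤ (ℤ × M) :=
  (LinearMap.mul ℤ ℤ).compl₁₂ (LinearMap.fst ℤ ℤ M) (LinearMap.fst ℤ ℤ M) +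
    B.compl₁₂ (LinearMap.snd ℤ ℤ M) (LinearMap.snd ℤ ℤ M)

/-- The orthogonal sum `U ⊕ M` with the hyperbolic plane `U`, whose Gram matrix is `!![0, 1; 1, 0]`;
the first two coordinates are those on `U`. -/
def hypSum (B : BilinForm ℤ M) : BilinForm ℤ (ℤ × ℤ × M) :=
  let α := LinearMap.fst ℤ ℤ (ℤ × M)
  let β := LinearMap.fst ℤ ℤ M ∘ₗ LinearMap.snd ℤ ℤ (ℤ × M)
  let μ := LinearMap.snd ℤ ℤ M ∘ₗ LinearMap.snd ℤ ℤ (ℤ × M)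
  (LinearMap.mul ℤ ℤ).compl₁₂ α β + (LinearMap.mul ℤ ℤ).compl₁₂ β α + B.compl₁₂ μ μ

theorem oneSum_apply (B : BilinForm ℤ M) (x y : ℤ × M) :
    oneSum B x y = x.1 * y.1 + B x.2 y.2 := rfl

theorem hypSum_apply (B : BilinForm ℤ M) (x y : ℤ × ℤ × M) :
    hypSum B x y = x.1 * y.2.1 + x.2.1 * y.1 + B x.2.2 y.2.2 := rfl

theorem isSymm_oneSum {B : BilinForm ℤ M} (hB : B.IsSymm) : (oneSum B).IsSymm :=
  ⟨fun x y => by simp only [oneSum_apply, hB.eq x.2, mul_comm]⟩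

theorem IsUnimodular.oneSum {B : BilinForm ℤ M} (hB : IsUnimodular B) :
    IsUnimodular (oneSum B) := by
  refine ⟨isSymm_oneSum hB.isSymm, fun φ => ?_⟩
  obtain ⟨m, hm⟩ := hB.surjective (φ ∘ₗ LinearMap.inr ℤ ℤ M)
  refine ⟨(φ (1, 0), m), LinearMap.prod_ext ?_ ?_⟩
  · ext
    simp [oneSum_apply]
  · ext
    simp [oneSum_apply, hm]

theorem IsNegDef.isLorentzian_oneSum {B : BilinForm ℤ M} (hneg : IsNegDef B) (hB : B.IsSymm) :
    IsLorentzian (oneSum B) := by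
  refine .of_isNegDef_restrict_ker (isSymm_oneSum hB) (u := (1, 0)) (by simp [oneSum_apply]) ?_
  rintro ⟨⟨a, m⟩, ham⟩ hne
  obtain rfl : a = 0 := by simpa [oneSum_apply] using ham
  have hm : m ≠ 0 := by
    rintro rfl
    exact hne rfl
  simpa [oneSum_apply] using hneg m hm

theorem even_oneSum_sub_fst {B : BilinForm ℤ M} (heven : ∀ m, Even (B m m)) (x : ℤ × M) :
    Even (oneSum B x x - x.1) := by
  have hsplit : oneSum B x x - x.1 = x.1 * (x.1 - 1) + B x.2 x.2 := by
    rw [oneSum_apply]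
    ring
  rw [hsplit]
  exact (Int.even_mul_pred_self x.1).add (heven x.2)

theorem exists_fst_add_two_mul_eq {B : BilinForm ℤ M} {B' : BilinForm ℤ M'}
    (heven : ∀ m, Even (B m m)) (heven' : ∀ m, Even (B' m m)) {g : ℤ × M →ₗ[ℤ] ℤ × M'}
    (hg : ∀ x, oneSum B' (g x) (g x) = oneSum B x x) :
    ∃ σ : ℤ × M →ₗ[ℤ] ℤ, ∀ x, (g x).1 = x.1 + 2 * σ x := by
  obtain ⟨σ, hσ⟩ := exists_eq_smul_of_forall_dvd (d := 2)
    (φ := LinearMap.fst ℤ ℤ M' ∘ₗ g - LinearMap.fst ℤ ℤ M) fun x => by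
      have h := (even_oneSum_sub_fst heven x).sub (even_oneSum_sub_fst heven' (g x))
      rw [hg, sub_sub_sub_cancel_left] at h
      exact h.two_dvd
  refine ⟨σ, fun x => ?_⟩
  have hx : (g x).1 - x.1 = 2 * σ x := LinearMap.congr_fun hσ x
  linarith

/-- The map `U ⊕ M → ⟨-1⟩ ⊕ (⟨1⟩ ⊕ M)` sending `(α, β, m)` to `(α - 2β, (α + 2β, 2m))`. It
multiplies the form by `4`. -/
def hypToOne (M : Type*) [AddCommGroup M] : ℤ × ℤ × M →ₗ[ℤ] ℤ × ℤ × M :=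
  let α := LinearMap.fst ℤ ℤ (ℤ × M)
  let β := LinearMap.fst ℤ ℤ M ∘ₗ LinearMap.snd ℤ ℤ (ℤ × M)
  let μ := LinearMap.snd ℤ ℤ M ∘ₗ LinearMap.snd ℤ ℤ (ℤ × M)
  (α - (2 : ℤ) • β).prod ((α + (2 : ℤ) • β).prod ((2 : ℤ) • μ))

theorem hypToOne_apply (x : ℤ × ℤ × M) :
    hypToOne M x = (x.1 - 2 * x.2.1, x.1 + 2 * x.2.1, (2 : ℤ) • x.2.2) := rfl

theorem four_mul_hypSum (B : BilinForm ℤ M) (x y : ℤ × ℤ × M) :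
    4 * hypSum B x y = oneSum B (hypToOne M x).2 (hypToOne M y).2 -
      (hypToOne M x).1 * (hypToOne M y).1 := by
  simp only [hypSum_apply, oneSum_apply, hypToOne_apply, map_smul, LinearMap.smul_apply,
    smul_eq_mul]
  ring

-- The congruence on `g (1, 0)` makes `id ⊕ g` carry the image of `hypToOne M` into that of
-- `hypToOne M'`.
theorem exists_isometry_hypSum {B : BilinForm ℤ M} {B' : BilinForm ℤ M'}
    (heven : ∀ m, Even (B m m)) (heven' : ∀ m, Even (B' m m)) {g : ℤ × M →ₗ[ℤ] ℤ × M'}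
    (hg : ∀ x y, oneSum B' (g x) (g y) = oneSum B x y) {s : ℤ × M'}
    (hs : g (1, 0) = (1, 0) + (4 : ℤ) • s) :
    ∃ F : ℤ × ℤ × M →ₗ[ℤ] ℤ × ℤ × M', ∀ x y, hypSum B' (F x) (F y) = hypSum B x y := by
  obtain ⟨σ, hσ⟩ := exists_fst_add_two_mul_eq heven heven' fun x => hg x x
  let α := LinearMap.fst ℤ ℤ (ℤ × M)
  let n := LinearMap.snd ℤ ℤ (ℤ × M)
  let ρ : ℤ × ℤ × M →ₗ[ℤ] ℤ := s.1 • α + σ ∘ₗ n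
  let F : ℤ × ℤ × M →ₗ[ℤ] ℤ × ℤ × M' :=
    (α + (2 : ℤ) • ρ).prod <| (LinearMap.fst ℤ ℤ M ∘ₗ n + ρ).prod <|
      ((2 : ℤ) • α).smulRight s.2 + LinearMap.snd ℤ ℤ M' ∘ₗ g ∘ₗ n
  have hypToOne_F (x : ℤ × ℤ × M) :
      hypToOne M' (F x) = ((hypToOne M x).1, g (hypToOne M x).2) := by
    obtain ⟨a, y⟩ := x
    have hsplit : (hypToOne M (a, y)).2 = a • (1, 0) + (2 : ℤ) • y := by
      ext <;> simp [hypToOne_apply]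
    rw [hsplit, map_add, map_smul, map_smul, hs]
    refine Prod.ext ?_ (Prod.ext ?_ ?_)
    · change a + 2 * ρ (a, y) - 2 * (y.1 + ρ (a, y)) = a - 2 * y.1
      ring
    · change a + 2 * ρ (a, y) + 2 * (y.1 + ρ (a, y)) = a * (1 + 4 * s.1) + 2 * (g y).1
      rw [hσ]
      change a + 2 * (s.1 * a + σ y) + 2 * (y.1 + (s.1 * a + σ y)) = _
      ring
    · change (2 : ℤ) • ((2 * a) • s.2 + (g y).2) = a • (0 + (4 : ℤ) • s.2) + (2 : ℤ) • (g y).2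
      module
  refine ⟨F, fun x y => mul_left_cancel₀ (four_ne_zero (α := ℤ)) ?_⟩
  simp only [four_mul_hypSum, hypToOne_F, hg]

end OrthogonalSums

section HyperbolicSplitting

variable {L : Type*} [AddCommGroup L] {B : BilinForm ℤ L}

theorem IsUnimodular.exists_hyperbolic_pair [Free ℤ L] (hB : IsUnimodular B)
    (heven : ∀ v, Even (B v v)) {z : L} (hz : z ≠ 0) (hzz : B z z = 0) :
    ∃ e f, B e e = 0 ∧ B f f = 0 ∧ B e f = 1 := by
  obtain ⟨e, f, hee, hef⟩ := hB.exists_isotropic_apply_eq_one hz hzz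
  obtain ⟨t, ht⟩ := heven f
  refine ⟨e, f - t • e, hee, ?_, by simp [hee, hef]⟩
  simp only [map_sub, map_smul, LinearMap.sub_apply, LinearMap.smul_apply, smul_eq_mul, hee, hef,
    hB.isSymm.eq f e, ht]
  ring

variable {e f : L}

/-- The orthogonal projection of `L` to `⟨e, f⟩ᗮ`, where `e, f` is a hyperbolic pair. -/
def hyperbolicProj (hB : B.IsSymm) (hee : B e e = 0) (hff : B f f = 0) (hef : B e f = 1) :
    L →ₗ[ℤ] ↥(LinearMap.ker (B e) ⊓ LinearMap.ker (B f)) :=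
  (LinearMap.id - (B f).smulRight e - (B e).smulRight f).codRestrict _ fun x => by
    simp [hee, hff, hef, hB.eq f e]

theorem coe_hyperbolicProj (hB : B.IsSymm) (hee : B e e = 0) (hff : B f f = 0) (hef : B e f = 1)
    (x : L) : (hyperbolicProj hB hee hff hef x : L) = x - B f x • e - B e x • f := rfl

theorem hyperbolicProj_coe (hB : B.IsSymm) (hee : B e e = 0) (hff : B f f = 0) (hef : B e f = 1)
    (m : ↥(LinearMap.ker (B e) ⊓ LinearMap.ker (B f))) : hyperbolicProj hB hee hff hef m = m := by
  obtain ⟨m, hem, hfm⟩ := m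
  apply Subtype.ext
  simp [coe_hyperbolicProj, LinearMap.mem_ker.mp hem, LinearMap.mem_ker.mp hfm]

/-- The splitting `L ≃ U ⊕ ⟨e, f⟩ᗮ` given by a hyperbolic pair `e, f`. -/
def hyperbolicEquiv (hB : B.IsSymm) (hee : B e e = 0) (hff : B f f = 0) (hef : B e f = 1) :
    L ≃ₗ[ℤ] ℤ × ℤ × ↥(LinearMap.ker (B e) ⊓ LinearMap.ker (B f)) where
  __ := (B f).prod ((B e).prod (hyperbolicProj hB hee hff hef))
  invFun x := x.1 • e + x.2.1 • f + (x.2.2 : L)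
  left_inv x := by
    change B f x • e + B e x • f + (x - B f x • e - B e x • f) = x
    abel
  right_inv := by
    rintro ⟨a, b, m, hm⟩
    obtain ⟨hem : B e m = 0, hfm : B f m = 0⟩ := hm
    refine Prod.ext ?_ (Prod.ext ?_ (Subtype.ext ?_))
    · change B f (a • e + b • f + m) = a
      simp [hff, hef, hfm, hB.eq f e]
    · change B e (a • e + b • f + m) = b
      simp [hee, hef, hem]
    · change a • e + b • f + m - B f (a • e + b • f + m) • e - B e (a • e + b • f + m) • f = m
      simp only [map_add, map_smul, smul_eq_mul, hee, hff, hef, hem, hfm, hB.eq f e]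
      module

theorem hypSum_hyperbolicEquiv (hB : B.IsSymm) (hee : B e e = 0) (hff : B f f = 0)
    (hef : B e f = 1) (x y : L) :
    hypSum (B.restrict (LinearMap.ker (B e) ⊓ LinearMap.ker (B f)))
      (hyperbolicEquiv hB hee hff hef x) (hyperbolicEquiv hB hee hff hef y) = B x y := by
  change B f x * B e y + B e x * B f y +
    B (x - B f x • e - B e x • f) (y - B f y • e - B e y • f) = B x y
  simp only [map_sub, map_smul, LinearMap.sub_apply, LinearMap.smul_apply, smul_eq_mul, hee, hff,
    hef, hB.eq f e, hB.eq x e, hB.eq x f]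
  ring

theorem IsUnimodular.restrict_hyperbolic_orthogonal (hB : IsUnimodular B) (hee : B e e = 0)
    (hff : B f f = 0) (hef : B e f = 1) :
    IsUnimodular (B.restrict (LinearMap.ker (B e) ⊓ LinearMap.ker (B f))) := by
  refine hB.restrict (hyperbolicProj hB.isSymm hee hff hef)
    (hyperbolicProj_coe hB.isSymm hee hff hef) ?_
  rintro x ⟨m, hm⟩
  obtain ⟨hem : B e m = 0, hfm : B f m = 0⟩ := hm
  simp [coe_hyperbolicProj, hem, hfm]

theorem IsLorentzian.isNegDef_hyperbolic_orthogonal (hL : IsLorentzian B) (hB : B.IsSymm)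
    (hee : B e e = 0) (hff : B f f = 0) (hef : B e f = 1) :
    IsNegDef (B.restrict (LinearMap.ker (B e) ⊓ LinearMap.ker (B f))) := by
  rintro ⟨m, hm⟩ hne
  obtain ⟨hem : B e m = 0, hfm : B f m = 0⟩ := hm
  refine hL.neg_of_apply_eq_zero (u := e + f) ?_ ?_ fun h => hne (Subtype.ext h)
  · simp [hee, hff, hef, hB.eq f e]
  · simp [hem, hfm]

end HyperbolicSplitting

section Uniqueness

theorem exists_unit_four_dvd {a : ℤ} (ha : Odd a) : ∃ ε : ℤˣ, 4 ∣ ε * a - 1 := by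
  obtain ⟨k, rfl⟩ := ha
  obtain ⟨j, rfl | rfl⟩ := Int.even_or_odd' k
  · exact ⟨1, j, by push_cast; ring⟩
  · exact ⟨-1, -j - 1, by push_cast; ring⟩

theorem exists_basis_four_dvd_fst_sub_one {M : Type*} [AddCommGroup M] [Free ℤ M]
    [Module.Finite ℤ M] {B : BilinForm ℤ M} (hB : IsUnimodular B) (hneg : IsNegDef B)
    (heven : ∀ m, Even (B m m)) {n : ℕ} (hn : n ≤ 8) (hr : finrank ℤ M = n) :
    ∃ c : Basis (Fin (n + 1)) ℤ (ℤ × M),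
      (∀ i j, oneSum B (c i) (c j) = diagonal (lorentzSign n) i j) ∧ ∀ i, 4 ∣ (c i).1 - 1 := by
  obtain ⟨b, hb⟩ := (hneg.isLorentzian_oneSum hB.isSymm).exists_diagonal_basis hn hB.oneSum
    (by rw [finrank_prod, finrank_self, hr, add_comm]) ⟨(1, 0), by simp [oneSum_apply]⟩
  have hodd (i : Fin (n + 1)) : Odd (b i).1 := by
    have hnorm : Odd (oneSum B (b i) (b i)) := by
      rw [hb, diagonal_apply_eq, lorentzSign]
      split_ifs <;> decide
    simpa using hnorm.sub_even (even_oneSum_sub_fst heven (b i))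
  choose ε hε using fun i => exists_unit_four_dvd (hodd i)
  refine ⟨b.unitsSMul ε, fun i j => ?_, fun i => ?_⟩
  · have hsq : (ε i : ℤ) * ε i = 1 := by rw [← Units.val_mul, Int.units_mul_self, Units.val_one]
    simp only [Basis.unitsSMul_apply, Units.smul_def, map_smul, LinearMap.smul_apply, hb,
      smul_eq_mul]
    obtain rfl | hij := eq_or_ne i j
    · rw [← mul_assoc, hsq, one_mul]
    · simp [hij]
  · rw [Basis.unitsSMul_apply, Units.smul_def]
    exact hε i

theorem apply_equiv_apply_equiv {ι L L' : Type*} [AddCommGroup L] [AddCommGroup L']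
    {B : BilinForm ℤ L} {B' : BilinForm ℤ L'} {b : Basis ι ℤ L} {b' : Basis ι ℤ L'}
    (h : ∀ i j, B' (b' i) (b' j) = B (b i) (b j)) (x y : L) :
    B' (b.equiv b' (Equiv.refl ι) x) (b.equiv b' (Equiv.refl ι) y) = B x y := by
  suffices B'.compl₁₂ (b.equiv b' (Equiv.refl ι) : L →ₗ[ℤ] L') (b.equiv b' (Equiv.refl ι)) = B from
    LinearMap.congr_fun₂ this x y
  refine LinearMap.ext_basis b b fun i j => ?_
  simp [h]

theorem exists_isometry_hypSum_of_isNegDef {M : Type*} {M' : Type*} [AddCommGroup M]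
    [AddCommGroup M'] [Free ℤ M] [Free ℤ M'] [Module.Finite ℤ M] [Module.Finite ℤ M']
    {B : BilinForm ℤ M} {B' : BilinForm ℤ M'} (hB : IsUnimodular B) (hB' : IsUnimodular B')
    (hneg : IsNegDef B) (hneg' : IsNegDef B') (heven : ∀ m, Even (B m m))
    (heven' : ∀ m, Even (B' m m)) (hr : finrank ℤ M ≤ 8) (hr' : finrank ℤ M' = finrank ℤ M) :
    ∃ F : ℤ × ℤ × M →ₗ[ℤ] ℤ × ℤ × M', ∀ x y, hypSum B' (F x) (F y) = hypSum B x y := by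
  obtain ⟨c, hc, hc4⟩ := exists_basis_four_dvd_fst_sub_one hB hneg heven hr rfl
  obtain ⟨c', hc', hc4'⟩ := exists_basis_four_dvd_fst_sub_one hB' hneg' heven' hr hr'
  let g := c.equiv c' (Equiv.refl _)
  have hg : ∀ x y, oneSum B' (g x) (g y) = oneSum B x y :=
    apply_equiv_apply_equiv fun i j => by rw [hc, hc']
  have four_dvd_basis (i) : 4 ∣ oneSum B' (g (1, 0) - (1, 0)) (c' i) := by
    have hgc : c' i = g (c i) := by simp [g]
    rw [map_sub, LinearMap.sub_apply]
    conv_rhs => enter [1]; rw [hgc, hg]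
    simpa [oneSum_apply] using dvd_sub (hc4 i) (hc4' i)
  have four_dvd (y : ℤ × M') : 4 ∣ oneSum B' (g (1, 0) - (1, 0)) y := by
    rw [← c'.sum_repr y, map_sum]
    refine Finset.dvd_sum fun i _ => ?_
    rw [map_smul]
    exact (four_dvd_basis i).mul_left _
  obtain ⟨ψ, hψ⟩ := exists_eq_smul_of_forall_dvd four_dvd
  obtain ⟨s, hs, -⟩ := hB'.oneSum.exists_eq_smul_of_apply_eq_smul hψ
  exact exists_isometry_hypSum heven heven' (g := g.toLinearMap) hg (s := s)
    (sub_eq_iff_eq_add'.mp hs)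

theorem IsLorentzian.exists_hypSum_equiv {L : Type*} [AddCommGroup L] [Free ℤ L]
    [Module.Finite ℤ L] {B : BilinForm ℤ L} (hL : IsLorentzian B) (hB : IsUnimodular B)
    (heven : ∀ v, Even (B v v)) (hr : finrank ℤ L = 10) :
    ∃ (M : Submodule ℤ L) (Φ : L ≃ₗ[ℤ] ℤ × ℤ × M), finrank ℤ M = 8 ∧
      IsUnimodular (B.restrict M) ∧ IsNegDef (B.restrict M) ∧
      ∀ x y, hypSum (B.restrict M) (Φ x) (Φ y) = B x y := by
  obtain ⟨z, hz, hzz⟩ := hL.exists_isotropic_of_even hB heven hr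
  obtain ⟨e, f, hee, hff, hef⟩ := hB.exists_hyperbolic_pair heven hz hzz
  let Φ := hyperbolicEquiv hB.isSymm hee hff hef
  refine ⟨_, Φ, ?_, hB.restrict_hyperbolic_orthogonal hee hff hef,
    hL.isNegDef_hyperbolic_orthogonal hB.isSymm hee hff hef,
    hypSum_hyperbolicEquiv hB.isSymm hee hff hef⟩
  have hrank := Φ.finrank_eq
  rw [finrank_prod, finrank_prod, finrank_self, hr] at hrank
  omega

theorem exists_isometry_of_isLorentzian {L : Type*} {L' : Type*} [AddCommGroup L]
    [AddCommGroup L'] [Free ℤ L] [Free ℤ L'] [Module.Finite ℤ L] [Module.Finite ℤ L']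
    {B : BilinForm ℤ L} {B' : BilinForm ℤ L'} (hL : IsLorentzian B) (hL' : IsLorentzian B')
    (hB : IsUnimodular B) (hB' : IsUnimodular B') (heven : ∀ v, Even (B v v))
    (heven' : ∀ v, Even (B' v v)) (hr : finrank ℤ L = 10) (hr' : finrank ℤ L' = 10) :
    ∃ F : L →ₗ[ℤ] L', ∀ x y, B' (F x) (F y) = B x y := by
  obtain ⟨M, Φ, hrM, hM, hnegM, hΦ⟩ := hL.exists_hypSum_equiv hB heven hr
  obtain ⟨M', Φ', hrM', hM', hnegM', hΦ'⟩ := hL'.exists_hypSum_equiv hB' heven' hr'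
  obtain ⟨G, hG⟩ := exists_isometry_hypSum_of_isNegDef hM hM' hnegM hnegM' (fun m => heven m)
    (fun m => heven' m) hrM.le (hrM'.trans hrM.symm)
  refine ⟨Φ'.symm.toLinearMap ∘ₗ G ∘ₗ Φ.toLinearMap, fun x y => ?_⟩
  rw [← hΦ', ← hΦ, ← hG]
  simp

end Uniqueness

section Matrices

theorem isUnimodular_toBilin' {ι : Type*} [Fintype ι] [DecidableEq ι] {A : Matrix ι ι ℤ}
    (hA : A.IsSymm) (hdet : IsUnit A.det) : IsUnimodular (toBilin' A) := by
  refine ⟨(Matrix.isSymm_toBilin'_iff_isSymm ..).mpr hA, fun φ => ?_⟩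
  refine ⟨A⁻¹ *ᵥ fun i => φ (Pi.single i 1), LinearMap.pi_ext' fun i => LinearMap.ext_ring ?_⟩
  rw [LinearMap.comp_apply, toBilin'_apply', dotProduct_mulVec, ← mulVec_transpose, hA.eq,
    mulVec_mulVec, mul_nonsing_inv _ hdet, one_mulVec]
  simp

theorem even_toBilin'_self {ι : Type*} [Fintype ι] [DecidableEq ι] {A : Matrix ι ι ℤ}
    (hA : A.IsSymm) (hdiag : ∀ i, 2 ∣ A i i) (v : ι → ℤ) : Even (toBilin' A v v) := by
  have hsymm : (toBilin' A).IsSymm := (Matrix.isSymm_toBilin'_iff_isSymm ..).mpr hA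
  induction v using Pi.single_induction with
  | zero => simp
  | add v w hv hw =>
    have hnorm : toBilin' A (v + w) (v + w) =
        toBilin' A v v + toBilin' A w w + 2 * toBilin' A v w := by
      simp only [map_add, LinearMap.add_apply, hsymm.eq w v]
      ring
    rw [hnorm]
    exact (hv.add hw).add (even_two_mul _)
  | single i m =>
    have hnorm : toBilin' A (Pi.single i m) (Pi.single i m) = A i i * (m * m) := by
      simp only [toBilin'_apply', mulVec_single, single_dotProduct, Pi.smul_apply, col_apply,
        MulOpposite.smul_eq_mul_unop, MulOpposite.unop_op]
      ring
    rw [hnorm]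
    exact (even_iff_two_dvd.mpr (hdiag i)).mul_right _

/-- The matrix `diag(1, -1, …, -1)` of size `n + 1`; thus `sigD` is `minkowski 9`. -/
noncomputable def minkowski (n : ℕ) : Matrix (Fin (n + 1)) (Fin (n + 1)) ℝ :=
  diagonal fun i => if i = 0 then 1 else -1

theorem dotProduct_minkowski_mulVec {n : ℕ} (v w : Fin (n + 1) → ℝ) :
    v ⬝ᵥ minkowski n *ᵥ w = v 0 * w 0 - ∑ i : Fin n, v i.succ * w i.succ := by
  simp [minkowski, dotProduct, mulVec_diagonal, Fin.sum_univ_succ, Fin.succ_ne_zero, sub_eq_add_neg]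

theorem minkowski_neg_of_orthogonal {n : ℕ} {u y : Fin (n + 1) → ℝ}
    (hu : 0 < u ⬝ᵥ minkowski n *ᵥ u) (huy : u ⬝ᵥ minkowski n *ᵥ y = 0) (hy : y ≠ 0) :
    y ⬝ᵥ minkowski n *ᵥ y < 0 := by
  simp only [dotProduct_minkowski_mulVec, ← sq] at hu huy ⊢
  set U := ∑ i : Fin n, u i.succ ^ 2
  set Y := ∑ i : Fin n, y i.succ ^ 2
  have hU0 : 0 ≤ U := Finset.sum_nonneg fun i _ => sq_nonneg _
  have hY0 : 0 ≤ Y := Finset.sum_nonneg fun i _ => sq_nonneg _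
  have hcs : (u 0) ^ 2 * (y 0) ^ 2 ≤ U * Y := by
    rw [← mul_pow, sub_eq_zero.mp huy]
    exact Finset.sum_mul_sq_le_sq_mul_sq ..
  obtain hYpos | hYzero := hY0.lt_or_eq
  · nlinarith
  · exfalso
    have hspace (i : Fin n) : y i.succ = 0 := by
      have := (Finset.sum_eq_zero_iff_of_nonneg fun i _ => sq_nonneg _).mp hYzero.symm i
        (Finset.mem_univ i)
      simpa using this
    have htime : y 0 = 0 := by
      by_contra h
      have : 0 < u 0 ^ 2 * y 0 ^ 2 := mul_pos (by linarith) (by positivity)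
      rw [← hYzero] at hcs
      linarith
    exact hy (funext fun i => Fin.cases htime hspace i)

theorem exists_intCast_pos {ι : Type*} [Finite ι] {Q : (ι → ℝ) → ℝ} (hQ : Continuous Q)
    (hhom : ∀ (c : ℝ) v, Q (c • v) = c ^ 2 * Q v) {v : ι → ℝ} (hv : 0 < Q v) :
    ∃ w : ι → ℤ, 0 < Q fun i => (w i : ℝ) := by
  have hdense : DenseRange fun (q : ι → ℚ) (i : ι) => (q i : ℝ) :=
    DenseRange.piMap fun _ => Rat.denseRange_cast
  obtain ⟨q, hq : 0 < Q fun i => (q i : ℝ)⟩ :=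
    hdense.exists_mem_open (isOpen_lt continuous_const hQ) ⟨v, hv⟩
  obtain ⟨d, hd⟩ := IsLocalization.exist_integer_multiples_of_finite (nonZeroDivisors ℤ) q
  choose w hw using hd
  have hd0 : ((d : ℤ) : ℝ) ≠ 0 := mod_cast nonZeroDivisors.coe_ne_zero d
  have hwq : (fun i => (w i : ℝ)) = ((d : ℤ) : ℝ) • fun i => (q i : ℝ) := by
    ext i
    have := congrArg (Rat.cast : ℚ → ℝ) (hw i)
    simpa using this
  refine ⟨w, ?_⟩
  rw [hwq, hhom]
  positivity

theorem intCast_toBilin' {ι : Type*} [Fintype ι] [DecidableEq ι] (A : Matrix ι ι ℤ)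
    (v w : ι → ℤ) : ((toBilin' A v w : ℤ) : ℝ) =
      (fun i => (v i : ℝ)) ⬝ᵥ A.map (Int.cast : ℤ → ℝ) *ᵥ fun i => (w i : ℝ) := by
  simp [toBilin'_apply', dotProduct, mulVec]

theorem dotProduct_conj_mulVec {R ι κ : Type*} [CommSemiring R] [Fintype ι] [Fintype κ]
    (A : Matrix ι ι R) (P : Matrix ι κ R) (v w : κ → R) :
    v ⬝ᵥ (Pᵀ * A * P) *ᵥ w = (P *ᵥ v) ⬝ᵥ A *ᵥ (P *ᵥ w) := by
  rw [← mulVec_mulVec, ← mulVec_mulVec, dotProduct_mulVec v, vecMul_transpose]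

theorem exists_toBilin'_pos {n : ℕ} {A : Matrix (Fin (n + 1)) (Fin (n + 1)) ℤ}
    {P : Matrix (Fin (n + 1)) (Fin (n + 1)) ℝ}
    (hPA : Pᵀ * A.map (Int.cast : ℤ → ℝ) * P = minkowski n) : ∃ w, 0 < toBilin' A w w := by
  let Q (v : Fin (n + 1) → ℝ) : ℝ := v ⬝ᵥ A.map (Int.cast : ℤ → ℝ) *ᵥ v
  have hcont : Continuous Q := by
    simp only [Q, dotProduct, mulVec]
    fun_prop
  have hhom (c : ℝ) (v : Fin (n + 1) → ℝ) : Q (c • v) = c ^ 2 * Q v := by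
    simp only [Q, mulVec_smul, smul_dotProduct, dotProduct_smul, smul_eq_mul]
    ring
  have hpos : 0 < Q (P *ᵥ Pi.single 0 1) := by
    simp only [Q]
    rw [← dotProduct_conj_mulVec, hPA, dotProduct_minkowski_mulVec]
    simp
  obtain ⟨w, hw⟩ := exists_intCast_pos hcont hhom hpos
  simp only [Q] at hw
  exact ⟨w, by rwa [← intCast_toBilin', Int.cast_pos] at hw⟩

theorem isLorentzian_toBilin' {n : ℕ} {A : Matrix (Fin (n + 1)) (Fin (n + 1)) ℤ}
    {P : Matrix (Fin (n + 1)) (Fin (n + 1)) ℝ} (hP : IsUnit P.det)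
    (hPA : Pᵀ * A.map (Int.cast : ℤ → ℝ) * P = minkowski n) : IsLorentzian (toBilin' A) := by
  refine ⟨exists_toBilin'_pos hPA, ?_⟩
  let coord (v : Fin (n + 1) → ℤ) : Fin (n + 1) → ℝ := P⁻¹ *ᵥ fun i => (v i : ℝ)
  have mulVec_coord (v : Fin (n + 1) → ℤ) : P *ᵥ coord v = fun i => (v i : ℝ) := by
    rw [mulVec_mulVec, mul_nonsing_inv _ hP, one_mulVec]
  have hcast (v w : Fin (n + 1) → ℤ) :
      ((toBilin' A v w : ℤ) : ℝ) = coord v ⬝ᵥ minkowski n *ᵥ coord w := by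
    rw [intCast_toBilin', ← hPA, dotProduct_conj_mulVec, mulVec_coord, mulVec_coord]
  rintro u hu ⟨y, huy : toBilin' A u y = 0⟩ hy
  change toBilin' A y y < 0
  rw [← Int.cast_lt (R := ℝ), hcast, Int.cast_zero]
  refine minkowski_neg_of_orthogonal (u := coord u) ?_ ?_ fun h => ?_
  · rw [← hcast]
    exact_mod_cast hu
  · rw [← hcast, huy, Int.cast_zero]
  · refine hy (Subtype.ext (funext fun i => ?_))
    have := congrFun (mulVec_coord y) i
    simpa [h] using this.symm

end Matrices

/-- Any two even unimodular `ℤ`-lattices of rank 10 and signature `(1,9)`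
are isomorphic. Concretely: if `A` and `B` are symmetric `10×10` integer matrices with
all diagonal entries even, with determinant of absolute value 1, and such that over `ℝ`
each is congruent to `diag(1, -1, …, -1)`, then there exists `P ∈ GL₁₀(ℤ)` with
`Pᵀ A P = B`. -/
theorem stmt9 (A B : Matrix (Fin 10) (Fin 10) ℤ)
    (hAsymm : A.IsSymm) (hBsymm : B.IsSymm)
    (hAeven : ∀ i, 2 ∣ A i i) (hBeven : ∀ i, 2 ∣ B i i)
    (hAdet : A.det = 1 ∨ A.det = -1) (hBdet : B.det = 1 ∨ B.det = -1)
    (hAsig : ∃ P : Matrix (Fin 10) (Fin 10) ℝ, IsUnit P.det ∧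
      Pᵀ * A.map (Int.cast : ℤ → ℝ) * P = sigD)
    (hBsig : ∃ P : Matrix (Fin 10) (Fin 10) ℝ, IsUnit P.det ∧
      Pᵀ * B.map (Int.cast : ℤ → ℝ) * P = sigD) :
    ∃ P : Matrix (Fin 10) (Fin 10) ℤ, IsUnit P.det ∧ Pᵀ * A * P = B := by
  obtain ⟨PA, hPA, hPAsig⟩ := hAsig
  obtain ⟨PB, hPB, hPBsig⟩ := hBsig
  have hAunit : IsUnit A.det := Int.isUnit_iff.mpr hAdet
  have hBunit : IsUnit B.det := Int.isUnit_iff.mpr hBdet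
  obtain ⟨F, hF⟩ := exists_isometry_of_isLorentzian
    (isLorentzian_toBilin' hPB hPBsig) (isLorentzian_toBilin' hPA hPAsig)
    (isUnimodular_toBilin' hBsymm hBunit) (isUnimodular_toBilin' hAsymm hAunit)
    (even_toBilin'_self hBsymm hBeven) (even_toBilin'_self hAsymm hAeven) (by simp) (by simp)
  have hPAP : (LinearMap.toMatrix' F)ᵀ * A * LinearMap.toMatrix' F = B := by
    rw [← LinearMap.BilinForm.toMatrix'_toBilin' A, ← LinearMap.BilinForm.toMatrix'_comp]
    conv_rhs => rw [← LinearMap.BilinForm.toMatrix'_toBilin' B]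
    exact congrArg _ (LinearMap.ext₂ hF)
  refine ⟨LinearMap.toMatrix' F, ?_, hPAP⟩
  rw [← hPAP, det_mul] at hBunit
  exact isUnit_of_mul_isUnit_right hBunit
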